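/- Let 𝒦: X → Y be a Markov operator (a randomized map) satisfying ‖𝒦(x) − 𝒦(x')‖_{TV} ≤ γ for all x, x' ∈ X. Then for any (ε, δ)-differentially private randomized mechanism ℳ, the composed mechanism 𝒦 ∘ ℳ is (ε, γδ)-differentially private. -/

import Mathlib

open MeasureTheory ProbabilityTheory

noncomputable section

/-- Total variation distance between two measures: the supremum over measurable sets of the
absolute difference of the measures. -/
noncomputable def tvDist {α : Type*} [MeasurableSpace α] (μ ν : Measure α) : ℝ :=
  ⨆ s : {s : Set α // MeasurableSet s}, |(μ s.1).toReal - (ν s.1).toReal|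

/-- A randomized mechanism `M : D → Measure R` is `(ε, δ)`-differentially private with respect to
an adjacency relation `adj` if for all adjacent inputs and all measurable output sets `S`,
`P[M d₁ ∈ S] ≤ e^ε P[M d₂ ∈ S] + δ`. -/
def IsDP {D R : Type*} [MeasurableSpace R] (adj : D → D → Prop) (M : D → Measure R)
    (ε δ : ℝ) : Prop :=
  ∀ d₁ d₂ : D, adj d₁ d₂ → ∀ S : Set R, MeasurableSet S →
    M d₁ S ≤ ENNReal.ofReal (Real.exp ε) * M d₂ S + ENNReal.ofReal δ

theorem abs_sub_le_of_tvDist {α : Type*} [MeasurableSpace α] (μ ν : Measure α)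
    [IsProbabilityMeasure μ] [IsProbabilityMeasure ν] {γ : ℝ} (h : tvDist μ ν ≤ γ)
    {S : Set α} (hS : MeasurableSet S) : |(μ S).toReal - (ν S).toReal| ≤ γ := by
  refine le_trans ?_ h
  refine le_ciSup (f := fun s : {s : Set α // MeasurableSet s} =>
    |(μ s.1).toReal - (ν s.1).toReal|) ⟨1, ?_⟩ ⟨S, hS⟩
  rintro _ ⟨s, rfl⟩
  have h1 : (μ s.1).toReal ≤ 1 := measureReal_le_one
  have h2 : (ν s.1).toReal ≤ 1 := measureReal_le_one
  have h3 : 0 ≤ (μ s.1).toReal := ENNReal.toReal_nonneg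
  have h4 : 0 ≤ (ν s.1).toReal := ENNReal.toReal_nonneg
  exact abs_le.2 ⟨by linarith, by linarith⟩

theorem lintegral_dp_bound {R : Type*} [MeasurableSpace R] (μ ν : Measure R)
    (e δ : ENNReal) (he : e ≠ ⊤) (γ : ℝ)
    (h : ∀ S : Set R, MeasurableSet S → μ S ≤ e * ν S + δ)
    (g : R → ℝ) (hg : Measurable g) (hg0 : ∀ x, 0 ≤ g x) (hgγ : ∀ x, g x ≤ γ) :
    ∫⁻ x, ENNReal.ofReal (g x) ∂μ ≤
      e * ∫⁻ x, ENNReal.ofReal (g x) ∂ν + ENNReal.ofReal γ * δ := by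
  rw [lintegral_eq_lintegral_meas_lt μ (Filter.Eventually.of_forall hg0) hg.aemeasurable,
    lintegral_eq_lintegral_meas_lt ν (Filter.Eventually.of_forall hg0) hg.aemeasurable]
  calc ∫⁻ t in Set.Ioi (0 : ℝ), μ {a | t < g a}
      ≤ ∫⁻ t in Set.Ioi (0 : ℝ), (e * ν {a | t < g a} +
          (Set.Iic γ).indicator (fun _ => δ) t) := by
        refine lintegral_mono fun t => ?_
        by_cases ht : t ≤ γ
        · rw [Set.indicator_of_mem (show t ∈ Set.Iic γ from ht)]
          exact h _ (measurableSet_lt measurable_const hg)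
        · have : {a | t < g a} = ∅ := by
            ext a
            simp only [Set.mem_setOf_eq, Set.mem_empty_iff_false, iff_false, not_lt]
            exact (hgγ a).trans (not_le.1 ht).le
          simp [this]
    _ = e * (∫⁻ t in Set.Ioi (0 : ℝ), ν {a | t < g a}) + ENNReal.ofReal γ * δ := by
        rw [lintegral_add_right _ (measurable_const.indicator measurableSet_Iic),
          lintegral_const_mul' _ _ he, lintegral_indicator_const measurableSet_Iic,
          Measure.restrict_apply measurableSet_Iic, Set.inter_comm, Set.Ioi_inter_Iic,
          Real.volume_Ioc, sub_zero, mul_comm δ]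

/-- Privacy amplification by a Markov operator (Balle et al.): if `K` is a Markov operator with
`‖K x − K x'‖_TV ≤ γ` for all `x, x'`, then for any `(ε, δ)`-DP randomized mechanism `M`,
the composition `K ∘ M` is `(ε, γδ)`-DP. -/
theorem dp_privacy_amplification_markov
    {D R Y : Type*} [MeasurableSpace D] [MeasurableSpace R] [MeasurableSpace Y]
    (adj : D → D → Prop) (M : D → Measure R) (hMprob : ∀ d, IsProbabilityMeasure (M d))
    (K : Kernel R Y) [IsMarkovKernel K]
    (ε δ γ : ℝ) (hε : 0 ≤ ε) (hδ : 0 ≤ δ) (hγ : 0 ≤ γ)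
    (hK : ∀ x x' : R, tvDist (K x) (K x') ≤ γ)
    (hM : IsDP adj M ε δ) :
    IsDP adj (fun d => (M d).bind (fun x => K x)) ε (γ * δ) := by
  intro d₁ d₂ hd S hS
  have := hMprob d₁
  have := hMprob d₂
  have hne : Nonempty R := (M d₁).nonempty_of_neZero
  have hf : Measurable fun x => K x S := K.measurable_coe hS
  have hfr : Measurable fun x => (K x S).toReal := hf.ennreal_toReal
  have hbdd : BddBelow (Set.range fun x => (K x S).toReal) :=
    ⟨0, by rintro _ ⟨x, rfl⟩; exact ENNReal.toReal_nonneg⟩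
  obtain ⟨a, ha⟩ : ∃ a, a = ⨅ x, (K x S).toReal := ⟨_, rfl⟩
  have ha0 : 0 ≤ a := ha ▸ le_ciInf fun x => ENNReal.toReal_nonneg
  have hle : ∀ x, a ≤ (K x S).toReal := fun x => ha ▸ ciInf_le hbdd x
  have hub : ∀ x, (K x S).toReal - a ≤ γ := by
    intro x
    have : (K x S).toReal - γ ≤ a := by
      rw [ha]
      refine le_ciInf fun y => ?_
      have := (abs_le.1 (abs_sub_le_of_tvDist _ _ (hK x y) hS)).2
      linarith
    linarith
  have key := lintegral_dp_bound (M d₁) (M d₂) (ENNReal.ofReal (Real.exp ε)) (ENNReal.ofReal δ)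
    ENNReal.ofReal_ne_top γ (hM d₁ d₂ hd) (fun x => (K x S).toReal - a) (hfr.sub_const a)
    (fun x => sub_nonneg.2 (hle x)) hub
  have hsplit : ∀ d, (M d).bind (fun x => K x) S =
      ENNReal.ofReal a + ∫⁻ x, ENNReal.ofReal ((K x S).toReal - a) ∂(M d) := by
    intro d
    have := hMprob d
    rw [Measure.bind_apply hS K.measurable.aemeasurable]
    have : ∀ x, K x S = ENNReal.ofReal a + ENNReal.ofReal ((K x S).toReal - a) := by
      intro x
      rw [← ENNReal.ofReal_add ha0 (sub_nonneg.2 (hle x)), add_sub_cancel,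
        ENNReal.ofReal_toReal (measure_ne_top _ _)]
    rw [lintegral_congr this, lintegral_add_left measurable_const, lintegral_const,
      measure_univ, mul_one]
  have he1 : 1 ≤ ENNReal.ofReal (Real.exp ε) :=
    ENNReal.one_le_ofReal.2 (Real.one_le_exp hε)
  show (M d₁).bind (fun x => K x) S ≤
    ENNReal.ofReal (Real.exp ε) * (M d₂).bind (fun x => K x) S + ENNReal.ofReal (γ * δ)
  rw [hsplit d₁, hsplit d₂, mul_add, add_assoc, ENNReal.ofReal_mul hγ]
  exact add_le_add (le_mul_of_one_le_left (zero_le) he1) key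

end
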